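/- arXiv:2409.11774 — 3 statements merged into one kernel-verified Lean document; each statement's English description precedes it below -/
import Mathlib

section
/- Let f(w) = w²/2 be the Burgers flux and let w₀ ≥ 0 be a real number. Define E(w₀) = { w ∈ ℝ : for every pair (η, ξ) of differentiable functions ℝ → ℝ with η convex and ξ′(s) = η′(s)·s for all s, one has ξ(w) − ξ(w₀) − η′(w₀)·(w²/2 − w₀²/2) ≤ 0 }. Then E(w₀) = (−∞, −w₀] ∪ {w₀}. -/
lemma hasDerivAt_pos_sq (x : ℝ) :
    HasDerivAt (fun y : ℝ => (max y 0) ^ 2) (2 * max x 0) x := by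
  rw [hasDerivAt_iff_isLittleO]
  have h1 : (fun y : ℝ => (max y 0) ^ 2 - (max x 0) ^ 2 - (y - x) • (2 * max x 0))
      =O[nhds x] (fun y : ℝ => (y - x) ^ 2) := by
    apply Asymptotics.IsBigO.of_bound 1
    refine Filter.Eventually.of_forall fun y => ?_
    rw [Real.norm_eq_abs, Real.norm_eq_abs, abs_of_nonneg (sq_nonneg (y - x)), abs_le, smul_eq_mul]
    rcases le_total x 0 with hx | hx <;> rcases le_total y 0 with hy | hy <;>
      simp only [max_eq_left, max_eq_right, hx, hy] <;> constructor <;> nlinarith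
  refine h1.trans_isLittleO ?_
  have h2 : (fun y : ℝ => y - x) =o[nhds x] (fun _ => (1 : ℝ)) := by
    rw [Asymptotics.isLittleO_one_iff]
    have : Continuous (fun y : ℝ => y - x) := by fun_prop
    simpa using this.tendsto x
  have h3 := h2.mul_isBigO (Asymptotics.isBigO_refl (fun y : ℝ => y - x) (nhds x))
  simpa [sq] using h3

lemma hasDerivAt_pos_cube (x : ℝ) :
    HasDerivAt (fun y : ℝ => (max y 0) ^ 3) (3 * (max x 0) ^ 2) x := by
  have h := (hasDerivAt_id x).mul (hasDerivAt_pos_sq x)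
  have e : (fun y : ℝ => (max y 0) ^ 3) = (id * fun y : ℝ => (max y 0) ^ 2) := by
    funext y
    rcases le_total y 0 with hy | hy <;> simp [hy] <;> ring
  rw [e]
  refine h.congr_deriv ?_
  rcases le_total x 0 with hy | hy <;> simp [hy] <;> ring

/-- For the Burgers flux `f(w) = w²/2` and boundary data `w₀ ≥ 0`, the
Dubois–Le Floch entropy boundary set equals `(-∞, -w₀] ∪ {w₀}`. -/
theorem burgers_entropy_boundary_set_nonneg
    (w₀ : ℝ) (hw₀ : 0 ≤ w₀) :
    {w : ℝ | ∀ η ξ : ℝ → ℝ, ConvexOn ℝ Set.univ η → Differentiable ℝ η →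
      Differentiable ℝ ξ → (∀ s, deriv ξ s = deriv η s * s) →
      ξ w - ξ w₀ - deriv η w₀ * (w ^ 2 / 2 - w₀ ^ 2 / 2) ≤ 0}
    = Set.Iic (-w₀) ∪ {w₀} := by
  ext w
  simp only [Set.mem_setOf_eq, Set.mem_union, Set.mem_Iic, Set.mem_singleton_iff]
  constructor
  · intro h
    by_contra! hc
    obtain ⟨h1, h2⟩ := hc
    rcases lt_or_ge 0 w with hw | hw
    · have d1 : ∀ s : ℝ, HasDerivAt (fun s : ℝ => s ^ 2 / 2) s s := fun s => by
        refine ((hasDerivAt_pow 2 s).div_const 2).congr_deriv ?_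
        norm_num
      have d2 : ∀ s : ℝ, HasDerivAt (fun s : ℝ => s ^ 3 / 3) (s * s) s := fun s => by
        refine ((hasDerivAt_pow 3 s).div_const 3).congr_deriv ?_
        norm_num; ring
      have D1 : deriv (fun s : ℝ => s ^ 2 / 2) = fun s => s := funext fun s => (d1 s).deriv
      have := h (fun s => s ^ 2 / 2) (fun s => s ^ 3 / 3)
        (Monotone.convexOn_univ_of_deriv (fun s => (d1 s).differentiableAt)
          (by rw [D1]; exact monotone_id))
        (fun s => (d1 s).differentiableAt) (fun s => (d2 s).differentiableAt)
        (fun s => by rw [(d1 s).deriv, (d2 s).deriv])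
      rw [D1] at this
      have h3 : 0 < (w - w₀) ^ 2 * (2 * w + w₀) :=
        mul_pos (by have := sub_ne_zero.2 h2; positivity) (by linarith)
      nlinarith
    · have d0 : ∀ s : ℝ, HasDerivAt (fun s : ℝ => s + w) 1 s := fun s =>
        (hasDerivAt_id s).add_const w
      have p2 : ∀ s : ℝ, HasDerivAt (fun s : ℝ => (max (s + w) 0) ^ 2) (2 * max (s + w) 0) s :=
        fun s => by
          have q := (hasDerivAt_pos_sq (s + w)).comp s (d0 s)
          rw [mul_one] at q
          exact q
      have p3 : ∀ s : ℝ, HasDerivAt (fun s : ℝ => (max (s + w) 0) ^ 3)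
          (3 * (max (s + w) 0) ^ 2) s :=
        fun s => by
          have q := (hasDerivAt_pos_cube (s + w)).comp s (d0 s)
          rw [mul_one] at q
          exact q
      have d1 : ∀ s : ℝ, HasDerivAt (fun s : ℝ => -w * s + (max (s + w) 0) ^ 2 / 2)
          (-w + max (s + w) 0) s := fun s => by
        refine (((hasDerivAt_id s).const_mul (-w)).add ((p2 s).div_const 2)).congr_deriv ?_
        ring
      have d2 : ∀ s : ℝ, HasDerivAt (fun s : ℝ => -w * (s ^ 2 / 2) + ((max (s + w) 0) ^ 3 / 3
          + -w * ((max (s + w) 0) ^ 2 / 2)))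
          ((-w + max (s + w) 0) * s) s := fun s => by
        refine ((((hasDerivAt_pow 2 s).div_const 2).const_mul (-w)).add (((p3 s).div_const 3).add
          (((p2 s).div_const 2).const_mul (-w)))).congr_deriv ?_
        rcases le_total (s + w) 0 with hy | hy <;> simp [hy] <;> ring
      have D1 : deriv (fun s : ℝ => -w * s + (max (s + w) 0) ^ 2 / 2) =
          fun s => -w + max (s + w) 0 := funext fun s => (d1 s).deriv
      have := h _ _
        (Monotone.convexOn_univ_of_deriv (fun s => (d1 s).differentiableAt)
          (by rw [D1]; intro a b hab; dsimp only; gcongr))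
        (fun s => (d1 s).differentiableAt) (fun s => (d2 s).differentiableAt)
        (fun s => by rw [(d1 s).deriv, (d2 s).deriv])
      rw [D1] at this
      have e1 : max (w + w) 0 = 0 := max_eq_right (by linarith)
      have e2 : max (w₀ + w) 0 = w₀ + w := max_eq_left (by linarith)
      simp only [e1, e2] at this
      have h3 : 0 < (w + w₀) ^ 2 * (w₀ - 2 * w) :=
        mul_pos (pow_pos (by linarith) 2) (by
          rcases hw.lt_or_eq with h | h
          · linarith
          · subst h; simp at h1 ⊢; exact h1)
      nlinarith
  · rintro (hw | rfl) η ξ hc hη hξ hd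
    · have hm : Monotone (deriv η) := by
        have := hc.monotoneOn_deriv (fun x _ => hη x)
        exact monotoneOn_univ.1 this
      have hx : ∀ s, HasDerivAt ξ (deriv η s * s) s := fun s => hd s ▸ (hξ s).hasDerivAt
      -- odd part
      have d1 : ∀ s, HasDerivAt (fun s => ξ s - ξ (-s)) ((deriv η s - deriv η (-s)) * s) s := by
        intro s
        refine ((hx s).sub ((hx (-s)).comp s (hasDerivAt_neg s))).congr_deriv ?_
        ring
      have m1 : Monotone (fun s => ξ s - ξ (-s)) := by
        apply monotone_of_deriv_nonneg (fun s => (d1 s).differentiableAt)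
        intro s
        rw [(d1 s).deriv]
        rcases le_total 0 s with h | h
        · exact mul_nonneg (sub_nonneg.2 (hm (by linarith))) h
        · exact mul_nonneg_of_nonpos_of_nonpos (sub_nonpos.2 (hm (by linarith))) h
      have k1 := m1 hw₀
      simp only [neg_zero, sub_self] at k1
      have d2 : ∀ s, HasDerivAt (fun s => ξ s - deriv η w₀ * (s ^ 2 / 2))
          ((deriv η s - deriv η w₀) * s) s := by
        intro s
        refine ((hx s).sub (((hasDerivAt_pow 2 s).div_const 2).const_mul _)).congr_deriv ?_
        norm_num; ring
      have m2 : MonotoneOn (fun s => ξ s - deriv η w₀ * (s ^ 2 / 2)) (Set.Iic (-w₀)) := by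
        apply monotoneOn_of_deriv_nonneg (convex_Iic _)
          (fun s _ => (d2 s).continuousAt.continuousWithinAt)
          (fun s _ => (d2 s).differentiableAt.differentiableWithinAt)
        intro s hs
        rw [interior_Iic, Set.mem_Iio] at hs
        rw [(d2 s).deriv]
        exact mul_nonneg_of_nonpos_of_nonpos (sub_nonpos.2 (hm (by linarith))) (by linarith)
      have k2 := m2 (Set.mem_Iic.2 hw) (Set.mem_Iic.2 le_rfl) hw
      simp only [neg_sq] at k2
      linarith
    · simp
end

section
/- Let f(w) = w²/2 be the Burgers flux and let w₀ ≤ 0 be a real number. Define E(w₀) = { w ∈ ℝ : for every pair (η, ξ) of differentiable functions ℝ → ℝ with η convex and ξ′(s) = η′(s)·s for all s, one has ξ(w) − ξ(w₀) − η′(w₀)·(w²/2 − w₀²/2) ≤ 0 }. Then E(w₀) = (−∞, 0]. -/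
lemma hasDerivAt_posPart_pow (n : ℕ) (s : ℝ) :
    HasDerivAt (fun x : ℝ => (max x 0) ^ (n + 2)) ((n + 2 : ℝ) * (max s 0) ^ (n + 1)) s := by
  rcases lt_trichotomy s 0 with h | h | h
  · have h1 : (fun x : ℝ => (max x 0) ^ (n + 2)) =ᶠ[nhds s] fun _ => (0 : ℝ) := by
      filter_upwards [Iio_mem_nhds h] with x hx
      rw [max_eq_right (le_of_lt hx)]; simp
    rw [max_eq_right h.le]
    simpa using (hasDerivAt_const s (0 : ℝ)).congr_of_eventuallyEq h1
  · subst h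
    have h2 : (fun x : ℝ => (max x 0) ^ (n + 2)) =O[nhds 0] fun x => ‖x - 0‖ ^ (n + 2) := by
      refine Asymptotics.IsBigO.of_bound 1 (Filter.Eventually.of_forall fun x => ?_)
      rw [norm_pow, norm_pow, norm_norm, one_mul, sub_zero]
      refine pow_le_pow_left₀ (norm_nonneg _) ?_ _
      rw [Real.norm_eq_abs, Real.norm_eq_abs, abs_of_nonneg (le_max_right x 0)]
      exact max_le (le_abs_self x) (abs_nonneg x)
    have := (h2.hasFDerivAt (𝕜 := ℝ) (by omega)).hasDerivAt
    simpa using this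
  · have h1 : (fun x : ℝ => (max x 0) ^ (n + 2)) =ᶠ[nhds s] fun x => x ^ (n + 2) := by
      filter_upwards [Ioi_mem_nhds h] with x hx
      rw [max_eq_left (le_of_lt hx)]
    rw [max_eq_left h.le]
    simpa using (hasDerivAt_pow (n + 2) s).congr_of_eventuallyEq h1

/-- For the Burgers flux `f(w) = w²/2` and boundary data `w₀ ≤ 0`, the
Dubois–Le Floch entropy boundary set equals `(-∞, 0]`. -/
theorem burgers_entropy_boundary_set_nonpos
    (w₀ : ℝ) (hw₀ : w₀ ≤ 0) :
    {w : ℝ | ∀ η ξ : ℝ → ℝ, ConvexOn ℝ Set.univ η → Differentiable ℝ η →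
      Differentiable ℝ ξ → (∀ s, deriv ξ s = deriv η s * s) →
      ξ w - ξ w₀ - deriv η w₀ * (w ^ 2 / 2 - w₀ ^ 2 / 2) ≤ 0}
    = Set.Iic 0 := by
  ext w
  simp only [Set.mem_ofPred_eq, Set.mem_Iic]
  constructor
  · intro H
    by_contra! hw
    have d1 : ∀ s : ℝ, HasDerivAt (fun x : ℝ => (max x 0) ^ 2) (2 * max s 0) s := fun s => by
      simpa using hasDerivAt_posPart_pow 0 s
    have d2 : ∀ s : ℝ, HasDerivAt (fun x : ℝ => 2 / 3 * (max x 0) ^ 3)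
        (2 * (max s 0) ^ 2) s := fun s => by
      have := (hasDerivAt_posPart_pow 1 s).const_mul (2 / 3 : ℝ)
      refine this.congr_deriv ?_
      norm_num
      ring
    have hm : Monotone (deriv fun x : ℝ => (max x 0) ^ 2) := by
      intro a b hab
      rw [(d1 a).deriv, (d1 b).deriv]
      have := max_le_max_right 0 hab
      linarith
    have h := H (fun x => (max x 0) ^ 2) (fun x => 2 / 3 * (max x 0) ^ 3)
      (hm.convexOn_univ_of_deriv fun s => (d1 s).differentiableAt)
      (fun s => (d1 s).differentiableAt) (fun s => (d2 s).differentiableAt)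
      (fun s => by
        rw [(d1 s).deriv, (d2 s).deriv]
        rcases le_total s 0 with h | h
        · simp [max_eq_right h]
        · rw [max_eq_left h]; ring)
    rw [(d1 w₀).deriv] at h
    simp only [max_eq_right hw₀, max_eq_left hw.le] at h
    have := pow_pos hw 3
    norm_num at h
    linarith
  · intro hw η ξ hc hη hξ hd
    have hmono : Monotone (deriv η) := by
      rw [← monotoneOn_univ]
      exact hc.monotoneOn_deriv fun x _ => hη x
    have hg : ∀ s, HasDerivAt (fun x => ξ x - deriv η w₀ * (x ^ 2 / 2))
        ((deriv η s - deriv η w₀) * s) s := fun s => by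
      have h1 := (hξ s).hasDerivAt
      rw [hd s] at h1
      have h2 := ((hasDerivAt_pow 2 s).div_const 2).const_mul (deriv η w₀)
      refine (h1.sub h2).congr_deriv ?_
      norm_num
      ring
    have hgc : Continuous (fun x => ξ x - deriv η w₀ * (x ^ 2 / 2)) :=
      continuous_iff_continuousAt.2 fun s => (hg s).continuousAt
    rcases le_total w w₀ with h | h
    · have := monotoneOn_of_deriv_nonneg (convex_Icc w w₀) hgc.continuousOn
        (fun s _ => (hg s).differentiableAt.differentiableWithinAt) (fun s hs => by
          rw [(hg s).deriv]
          rw [interior_Icc] at hs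
          have := hmono hs.2.le
          exact mul_nonneg_of_nonpos_of_nonpos (by linarith) (by linarith [hs.2]))
        (Set.left_mem_Icc.2 h) (Set.right_mem_Icc.2 h) h
      simp only at this
      linarith
    · have := antitoneOn_of_deriv_nonpos (convex_Icc w₀ w) hgc.continuousOn
        (fun s _ => (hg s).differentiableAt.differentiableWithinAt) (fun s hs => by
          rw [(hg s).deriv]
          rw [interior_Icc] at hs
          have := hmono hs.1.le
          exact mul_nonpos_of_nonneg_of_nonpos (by linarith) (by linarith [hs.2]))
        (Set.left_mem_Icc.2 h) (Set.right_mem_Icc.2 h) h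
      simp only at this
      linarith
end

section
/- Let n be a natural number, λ : Fin n → ℝ a family of wave speeds, and w₀ : Fin n → ℝ a boundary state. Define E(w₀) = { w : Fin n → ℝ : for every family η : Fin n → (ℝ → ℝ) of convex differentiable functions, ∑ⱼ λⱼ·(ηⱼ(wⱼ) − ηⱼ((w₀)ⱼ) − ηⱼ′((w₀)ⱼ)·(wⱼ − (w₀)ⱼ)) ≤ 0 }. Then E(w₀) = { w : Fin n → ℝ : for every j with λⱼ > 0, wⱼ = (w₀)ⱼ }. In particular, the entropy boundary inequality for a decoupled linear hyperbolic system is equivalent to the classical characteristic boundary condition prescribing exactly the incoming characteristic variables (with no reflection of outgoing ones). -/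
/-- A differentiable convex function lies above its tangent lines. -/
lemma tangent_le_aux (f : ℝ → ℝ) (hc : ConvexOn ℝ Set.univ f) (hd : Differentiable ℝ f)
    (a b : ℝ) : 0 ≤ f b - f a - deriv f a * (b - a) := by
  rcases lt_trichotomy a b with h | h | h
  · have := hc.le_slope_of_hasDerivAt (Set.mem_univ a) (Set.mem_univ b) h (hd a).hasDerivAt
    rw [slope_def_field, le_div_iff₀ (by linarith)] at this
    linarith
  · subst h; simp
  · have := hc.slope_le_of_hasDerivAt (Set.mem_univ b) (Set.mem_univ a) h (hd a).hasDerivAt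
    rw [slope_def_field, div_le_iff₀ (by linarith)] at this
    linarith

/-- For a decoupled linear hyperbolic system `∂ₜw + Λ ∂ₓw = 0` with
`Λ = diag(λ₁, …, λₙ)`, the Dubois–Le Floch entropy boundary set coincides with
the classical characteristic boundary condition: exactly the incoming
characteristic variables (those with `λⱼ > 0`) are prescribed, with no
reflection of the outgoing ones. -/
theorem linear_system_entropy_boundary_set
    (n : ℕ) (lam w₀ : Fin n → ℝ) :
    {w : Fin n → ℝ | ∀ η : Fin n → (ℝ → ℝ),
      (∀ j, ConvexOn ℝ Set.univ (η j) ∧ Differentiable ℝ (η j)) →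
      ∑ j, lam j * (η j (w j) - η j (w₀ j)
        - deriv (η j) (w₀ j) * (w j - w₀ j)) ≤ 0}
    = {w : Fin n → ℝ | ∀ j, 0 < lam j → w j = w₀ j} := by
  ext w
  simp only [Set.mem_setOf_eq]
  constructor
  · intro h j hj
    have hη := h (fun i x => (if i = j then (1 : ℝ) else 0) * x ^ 2) (by
      intro i
      refine ⟨?_, by fun_prop⟩
      have h2 : ConvexOn ℝ Set.univ (fun x : ℝ => x ^ 2) := even_two.convexOn_pow
      exact h2.smul (c := if i = j then (1 : ℝ) else 0) (by split_ifs <;> norm_num))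
    rw [Finset.sum_eq_single j (by intro i _ hi; simp [hi]) (by simp)] at hη
    simp at hη
    have h3 : lam j * (w j - w₀ j) ^ 2 ≤ 0 := by nlinarith
    have h4 : (w j - w₀ j) ^ 2 ≤ 0 := by
      by_contra hc
      push Not at hc
      nlinarith [mul_pos hj hc]
    have h5 := pow_eq_zero_iff (two_ne_zero) |>.1 (le_antisymm h4 (sq_nonneg _))
    linarith
  · intro h η hη
    apply Finset.sum_nonpos
    intro j _
    rcases lt_or_ge 0 (lam j) with hj | hj
    · simp [h j hj]
    · exact mul_nonpos_of_nonpos_of_nonneg hj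
        (tangent_le_aux (η j) (hη j).1 (hη j).2 (w₀ j) (w j))
end
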